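/- Let K be a field, A = K[x_1, ..., x_n], and let F ∈ A^{2×2} with det(F) = p, where p ∈ K[x_1] is an irreducible univariate polynomial (viewed in A). If the ideal of A generated by the four entries of F equals A, then F is equivalent to diag(1, p). -/

import Mathlib

/-- Two `l × m` matrices over a commutative ring are equivalent if they differ by
left/right multiplication by square matrices with unit determinant. -/
def MatrixEquiv {B : Type*} [CommRing B] {l m : ℕ}
    (F G : Matrix (Fin l) (Fin m) B) : Prop :=
  ∃ (U : Matrix (Fin l) (Fin l) B) (V : Matrix (Fin m) (Fin m) B),
    IsUnit U.det ∧ IsUnit V.det ∧ F = U * G * V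

/-- The image of a univariate polynomial `p ∈ K[x₁]` in `A = K[x₁, …, x_{n+1}]`,
sending the variable to `x₁` (the variable of index `0`). -/
noncomputable def polyImage {K : Type*} [CommRing K] (n : ℕ) (p : Polynomial K) :
    MvPolynomial (Fin (n + 1)) K :=
  Polynomial.aeval (MvPolynomial.X 0) p

/-- If `f` is monic and `f`, `g` are coprime modulo `ker φ`, the ideal `(f, g)` contains a constant
congruent to `1` modulo `ker φ`. -/
theorem exists_const_mem_span_of_monic {B D : Type*} [CommRing B] [CommRing D] (φ : B →+* D)
    (hφ : Function.Surjective φ) {f g : Polynomial B} (hf : f.Monic)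
    (h : IsCoprime (f.map φ) (g.map φ)) :
    ∃ r : B, φ r = 1 ∧ ∃ a b : Polynomial B, a * f + b * g = Polynomial.C r := by
  let I : Ideal (Polynomial B) := Ideal.span {f, g}
  have hfin : Module.Finite B (Polynomial B ⧸ I) := by
    have := hf.finite_quotient
    have hle : Ideal.span {f} ≤ I := Ideal.span_mono (by simp)
    exact Module.Finite.of_surjective (Ideal.Quotient.factorₐ B hle).toLinearMap
      (Ideal.Quotient.factor_surjective hle)
  have hsmul : (⊤ : Submodule B (Polynomial B ⧸ I)) ≤ RingHom.ker φ • ⊤ := by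
    obtain ⟨a', b', hab⟩ := h
    obtain ⟨a, rfl⟩ := Polynomial.map_surjective φ hφ a'
    obtain ⟨b, rfl⟩ := Polynomial.map_surjective φ hφ b'
    rintro x -
    obtain ⟨y, rfl⟩ := Ideal.Quotient.mk_surjective x
    have hk : ∀ i, φ ((y * (1 - (a * f + b * g))).coeff i) = 0 := by
      intro i
      rw [← Polynomial.coeff_map]
      simp [hab]
    have hy : Ideal.Quotient.mk I y = Ideal.Quotient.mk I (y * (1 - (a * f + b * g))) := by
      rw [Ideal.Quotient.mk_eq_mk_iff_sub_mem]
      refine Ideal.mem_span_pair.2 ⟨y * a, y * b, by ring⟩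
    rw [hy, (y * (1 - (a * f + b * g))).as_sum_range_C_mul_X_pow, map_sum]
    refine Submodule.sum_mem _ fun i _ => ?_
    rw [← Polynomial.smul_eq_C_mul]
    exact Submodule.smul_mem_smul (r := (y * (1 - (a * f + b * g))).coeff i)
      (n := Ideal.Quotient.mk I (Polynomial.X ^ i)) (hk i) trivial
  obtain ⟨r, hr, hr0⟩ := Submodule.exists_sub_one_mem_and_smul_eq_zero_of_fg_of_le_smul
    (RingHom.ker φ) (⊤ : Submodule B (Polynomial B ⧸ I)) hfin.fg_top hsmul
  refine ⟨r, by simpa [RingHom.mem_ker, sub_eq_zero] using hr, ?_⟩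
  have h1 : Ideal.Quotient.mk I (Polynomial.C r) = 0 := by
    have := hr0 (Ideal.Quotient.mk I 1) trivial
    rwa [← Ideal.Quotient.mkₐ_eq_mk B, ← map_smul, Polynomial.smul_eq_C_mul, mul_one] at this
  exact Ideal.mem_span_pair.1 (Ideal.Quotient.eq_zero_iff_mem.1 h1)

theorem Polynomial.exists_comp_C_mul_X_eq {B : Type*} [CommRing B] (r : B) (f : Polynomial B) :
    ∃ d : Polynomial B, f.comp (C r * X) = C (f.eval 0) + C r * X * d := by
  refine ⟨f.divX.comp (C r * X), ?_⟩
  conv_lhs => rw [← Polynomial.divX_mul_X_add f]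
  simp [Polynomial.coeff_zero_eq_eval_zero]
  ring

/-- A pair `(f, g)` with `f` monic which is unimodular modulo `ker φ` is, modulo `ker φ`, in the
`SL₂`-orbit of its value at `0`. -/
theorem exists_det_one_mulVec_eval_zero {B D : Type*} [CommRing B] [IsDomain B] [CommRing D]
    [Nontrivial D] (φ : B →+* D) (hφ : Function.Surjective φ) {f g : Polynomial B} (hf : f.Monic)
    (h : IsCoprime (f.map φ) (g.map φ)) :
    ∃ E : Matrix (Fin 2) (Fin 2) (Polynomial B), E.det = 1 ∧
      (E 0 0 * Polynomial.C (f.eval 0) + E 0 1 * Polynomial.C (g.eval 0)).map φ = f.map φ ∧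
      (E 1 0 * Polynomial.C (f.eval 0) + E 1 1 * Polynomial.C (g.eval 0)).map φ = g.map φ := by
  obtain ⟨r, hr, a, b, hab⟩ := exists_const_mem_span_of_monic φ hφ hf h
  have hr0 : Polynomial.C r ≠ 0 := by
    rw [Ne, Polynomial.C_eq_zero]
    rintro rfl
    simp at hr
  have hmap (u : Polynomial B) : (u.comp (Polynomial.C r * Polynomial.X)).map φ = u.map φ := by
    simp [Polynomial.map_comp, hr]
  obtain ⟨df, hdf⟩ := f.exists_comp_C_mul_X_eq r
  obtain ⟨dg, hdg⟩ := g.exists_comp_C_mul_X_eq r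
  obtain ⟨da, hda⟩ := a.exists_comp_C_mul_X_eq r
  obtain ⟨db, hdb⟩ := b.exists_comp_C_mul_X_eq r
  have hab0 : Polynomial.C (a.eval 0) * Polynomial.C (f.eval 0) +
      Polynomial.C (b.eval 0) * Polynomial.C (g.eval 0) = Polynomial.C r := by
    simpa using congrArg (fun u => Polynomial.C (Polynomial.eval 0 u)) hab
  have habr := congrArg (fun u => u.comp (Polynomial.C r * Polynomial.X)) hab
  simp only [Polynomial.add_comp, Polynomial.mul_comp, Polynomial.C_comp, hdf, hdg, hda, hdb]
    at habr
  rw [← hmap f, ← hmap g, hdf, hdg]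
  generalize Polynomial.C (f.eval 0) = f₀ at *
  generalize Polynomial.C (g.eval 0) = g₀ at *
  generalize Polynomial.C (a.eval 0) = a₀ at *
  generalize Polynomial.C (b.eval 0) = b₀ at *
  generalize Polynomial.C r = s at *
  refine ⟨!![1 + Polynomial.X * (df * a₀ + db * g₀), Polynomial.X * (df * b₀ - db * f₀);
    Polynomial.X * (dg * a₀ - da * g₀), 1 + Polynomial.X * (dg * b₀ + da * f₀)], ?_, ?_, ?_⟩
  · rw [Matrix.det_fin_two_of]
    apply mul_left_cancel₀ hr0
    linear_combination habr - hab0 + Polynomial.X ^ 2 * (da * df + db * dg) * s * hab0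
  · congr 1
    simp only [Matrix.of_apply, Matrix.cons_val', Matrix.cons_val_zero, Matrix.cons_val_one,
      Matrix.cons_val_fin_one]
    linear_combination Polynomial.X * df * hab0
  · congr 1
    simp only [Matrix.of_apply, Matrix.cons_val', Matrix.cons_val_zero, Matrix.cons_val_one,
      Matrix.cons_val_fin_one]
    linear_combination Polynomial.X * dg * hab0

/-- Over a unique factorization domain a singular `2 × 2` matrix is a column times a row. -/
theorem exists_eq_mul_of_mul_eq_mul {D : Type*} [CommRing D] [IsDomain D]
    [UniqueFactorizationMonoid D] {a b c d : D} (h : a * d = b * c) :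
    ∃ u₁ u₂ v₁ v₂ : D, a = u₁ * v₁ ∧ b = u₁ * v₂ ∧ c = u₂ * v₁ ∧ d = u₂ * v₂ := by
  by_cases ha : a = 0
  · subst ha
    rcases mul_eq_zero.1 (by simpa using h.symm : b * c = 0) with rfl | rfl
    · exact ⟨0, 1, c, d, by simp⟩
    · exact ⟨b, d, 0, 1, by simp⟩
  · obtain ⟨u₁, u₂, v₁, hu, rfl, rfl⟩ :=
      UniqueFactorizationMonoid.exists_reduced_factors a ha c
    have hv₁ : v₁ ≠ 0 := left_ne_zero_of_mul ha
    have hu₁ : u₁ ≠ 0 := right_ne_zero_of_mul ha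
    have h' : u₁ * d = u₂ * b := mul_left_cancel₀ hv₁ (by linear_combination h)
    obtain ⟨v₂, rfl⟩ := hu.dvd_of_dvd_mul_left ⟨d, h'.symm⟩
    refine ⟨u₁, u₂, v₁, v₂, mul_comm _ _, rfl, mul_comm _ _, mul_left_cancel₀ hu₁ ?_⟩
    linear_combination h'

/-- The endomorphism `X₀ ↦ X₀`, `Xᵢ ↦ Xᵢ + c X₀ ^ (N ^ i)` of a polynomial ring. -/
noncomputable def shearHom (S : Type*) [CommRing S] (n N : ℕ) (c : S) :
    MvPolynomial (Fin (n + 1)) S →ₐ[S] MvPolynomial (Fin (n + 1)) S :=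
  MvPolynomial.aeval fun i =>
    if i = 0 then MvPolynomial.X 0 else MvPolynomial.X i + c • MvPolynomial.X 0 ^ N ^ (i : ℕ)

theorem shearHom_comp_neg (S : Type*) [CommRing S] (n N : ℕ) (c : S) :
    (shearHom S n N c).comp (shearHom S n N (-c)) = AlgHom.id _ _ := by
  ext i
  cases i using Fin.cases <;> simp [shearHom]

/-- The automorphism `X₀ ↦ X₀`, `Xᵢ ↦ Xᵢ + X₀ ^ (N ^ i)` of a polynomial ring. -/
noncomputable def shear (S : Type*) [CommRing S] (n N : ℕ) :
    MvPolynomial (Fin (n + 1)) S ≃ₐ[S] MvPolynomial (Fin (n + 1)) S :=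
  AlgEquiv.ofAlgHom (shearHom S n N 1) (shearHom S n N (-1))
    (shearHom_comp_neg S n N 1) (by simpa using shearHom_comp_neg S n N (-1))

/-- The shear followed by viewing a polynomial as univariate in `X₀`. -/
noncomputable def shearEquiv (S : Type*) [CommRing S] (n N : ℕ) :
    MvPolynomial (Fin (n + 1)) S ≃ₐ[S] Polynomial (MvPolynomial (Fin n) S) :=
  (shear S n N).trans (MvPolynomial.finSuccEquiv S n)

theorem shearEquiv_X_zero (S : Type*) [CommRing S] (n N : ℕ) :
    shearEquiv S n N (MvPolynomial.X 0) = Polynomial.X := by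
  simp [shearEquiv, shear, shearHom, MvPolynomial.finSuccEquiv_X_zero]

theorem shearEquiv_X_succ (S : Type*) [CommRing S] (n N : ℕ) (i : Fin n) :
    shearEquiv S n N (MvPolynomial.X i.succ) =
      Polynomial.X ^ N ^ ((i : ℕ) + 1) + Polynomial.C (MvPolynomial.X i) := by
  simp [shearEquiv, shear, shearHom, MvPolynomial.finSuccEquiv_X_zero,
    MvPolynomial.finSuccEquiv_X_succ, add_comm]

theorem shearEquiv_C {S : Type*} [CommRing S] (n N : ℕ) (a : S) :
    shearEquiv S n N (MvPolynomial.C a) = Polynomial.C (MvPolynomial.C a) :=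
  (shearEquiv S n N).commutes a

theorem map_shearEquiv {R S : Type*} [CommRing R] [CommRing S] (q : R →+* S) (n N : ℕ)
    (f : MvPolynomial (Fin (n + 1)) R) :
    (shearEquiv R n N f).map (MvPolynomial.map q) = shearEquiv S n N (MvPolynomial.map q f) := by
  induction f using MvPolynomial.induction_on with
  | C a => simp [shearEquiv_C]
  | add f g hf hg => simp [hf, hg]
  | mul_X f i hf =>
    cases i using Fin.cases <;> simp [hf, shearEquiv_X_zero, shearEquiv_X_succ]

theorem shearEquiv_X_monic (S : Type*) [CommRing S] (n : ℕ) {N : ℕ} (hN : N ≠ 0)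
    (i : Fin (n + 1)) : (shearEquiv S n N (MvPolynomial.X i)).Monic := by
  cases i using Fin.cases with
  | zero => simp [shearEquiv_X_zero]
  | succ i =>
    rw [shearEquiv_X_succ]
    exact Polynomial.monic_X_pow_add_C _ (pow_ne_zero _ hN)

theorem natDegree_shearEquiv_X (S : Type*) [CommRing S] [Nontrivial S] (n N : ℕ)
    (i : Fin (n + 1)) : (shearEquiv S n N (MvPolynomial.X i)).natDegree = N ^ (i : ℕ) := by
  cases i using Fin.cases with
  | zero => simp [shearEquiv_X_zero]
  | succ i => rw [shearEquiv_X_succ, Polynomial.natDegree_X_pow_add_C, Fin.val_succ]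

theorem shearEquiv_monomial (S : Type*) [CommRing S] (n N : ℕ) (v : Fin (n + 1) →₀ ℕ) (a : S) :
    shearEquiv S n N (MvPolynomial.monomial v a) = Polynomial.C (MvPolynomial.C a) *
      ∏ i, shearEquiv S n N (MvPolynomial.X i) ^ v i := by
  rw [MvPolynomial.monomial_eq, Finsupp.prod_fintype _ _ (fun i => pow_zero _), map_mul,
    shearEquiv_C, map_prod]
  simp only [map_pow]

theorem shearEquiv_prod_monic (S : Type*) [CommRing S] (n : ℕ) {N : ℕ} (hN : N ≠ 0)
    (v : Fin (n + 1) →₀ ℕ) : (∏ i, shearEquiv S n N (MvPolynomial.X i) ^ v i).Monic :=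
  Polynomial.monic_prod_of_monic _ _ fun i _ => (shearEquiv_X_monic S n hN i).pow _

theorem leadingCoeff_shearEquiv_monomial (S : Type*) [CommRing S] [IsDomain S] (n : ℕ) {N : ℕ}
    (hN : N ≠ 0) (v : Fin (n + 1) →₀ ℕ) (a : S) :
    (shearEquiv S n N (MvPolynomial.monomial v a)).leadingCoeff = MvPolynomial.C a := by
  rw [shearEquiv_monomial, Polynomial.leadingCoeff_mul_monic (shearEquiv_prod_monic S n hN v),
    Polynomial.leadingCoeff_C]

theorem degree_shearEquiv_monomial (S : Type*) [CommRing S] [IsDomain S] (n : ℕ) {N : ℕ}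
    (hN : N ≠ 0) (v : Fin (n + 1) →₀ ℕ) {a : S} (ha : a ≠ 0) :
    (shearEquiv S n N (MvPolynomial.monomial v a)).degree =
      ((∑ i : Fin (n + 1), N ^ (i : ℕ) * v i : ℕ) : WithBot ℕ) := by
  have hm := shearEquiv_prod_monic S n hN v
  rw [shearEquiv_monomial, Polynomial.degree_mul, Polynomial.degree_C (by simpa using ha),
    zero_add, Polynomial.degree_eq_natDegree hm.ne_zero,
    Polynomial.natDegree_prod_of_monic _ _ fun i _ => (shearEquiv_X_monic S n hN i).pow _]
  congr 1
  refine Finset.sum_congr rfl fun i _ => ?_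
  rw [(shearEquiv_X_monic S n hN i).natDegree_pow, natDegree_shearEquiv_X, mul_comm]

/-- Base-`N` expansions with digits below `N` are unique. -/
theorem sum_pow_mul_ne {n N : ℕ} (hN : 1 < N) {v w : Fin (n + 1) →₀ ℕ} (hv : ∀ i, v i < N)
    (hw : ∀ i, w i < N) (hne : v ≠ w) :
    ∑ i : Fin (n + 1), N ^ (i : ℕ) * v i ≠ ∑ i : Fin (n + 1), N ^ (i : ℕ) * w i := by
  intro h
  refine hne (Finsupp.ext (congrFun (List.ofFn_inj.mp ?_)))
  apply Nat.ofDigits_inj_of_len_eq hN (by simp) (by grind) (by grind)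
  simpa only [Nat.ofDigits_eq_sum_mapIdx, List.mapIdx_eq_ofFn, List.get_ofFn, List.length_ofFn,
    Fin.val_cast, mul_comm, List.sum_ofFn] using! h

/-- A suitable shear makes the leading coefficient in `X₀` of a nonzero polynomial constant. -/
theorem exists_leadingCoeff_shearEquiv {S : Type*} [CommRing S] [IsDomain S] {n : ℕ}
    {f : MvPolynomial (Fin (n + 1)) S} (hf : f ≠ 0) :
    ∃ N, ∃ a : S, a ≠ 0 ∧ (shearEquiv S n N f).leadingCoeff = MvPolynomial.C a := by
  set N := 2 + f.totalDegree with hNdef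
  have hN : N ≠ 0 := by omega
  obtain ⟨v, hv, hmax⟩ := Finset.exists_max_image f.support
    (fun v => ∑ i : Fin (n + 1), N ^ (i : ℕ) * v i) (MvPolynomial.support_nonempty.mpr hf)
  have hdigit {w : Fin (n + 1) →₀ ℕ} (hw : w ∈ f.support) (i : Fin (n + 1)) : w i < N :=
    lt_of_le_of_lt ((MvPolynomial.monomial_le_degreeOf i hw).trans
      (MvPolynomial.degreeOf_le_totalDegree f i)) (by omega)
  refine ⟨N, f.coeff v, MvPolynomial.mem_support_iff.mp hv, ?_⟩
  nth_rw 1 [← f.support_sum_monomial_coeff]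
  rw [Finset.sum_eq_add_sum_sdiff_singleton_of_mem hv, map_add, map_sum, add_comm,
    Polynomial.leadingCoeff_add_of_degree_lt, leadingCoeff_shearEquiv_monomial S n hN]
  refine lt_of_le_of_lt (Polynomial.degree_sum_le _ _) ?_
  rw [degree_shearEquiv_monomial S n hN v (MvPolynomial.mem_support_iff.mp hv)]
  refine (Finset.sup_lt_iff (WithBot.bot_lt_coe _)).mpr fun w hw => ?_
  obtain ⟨hw, hwv⟩ := Finset.mem_sdiff.mp hw
  rw [degree_shearEquiv_monomial S n hN w (MvPolynomial.mem_support_iff.mp hw)]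
  exact_mod_cast lt_of_le_of_ne (hmax w hw)
    (sum_pow_mul_ne (by omega) (hdigit hw) (hdigit hv) (by simpa using hwv))

/-- Up to a scalar, a column of length two over `L[X₁, …, Xₘ]` that is unimodular lifts to the
first column of a matrix in `SL₂(R[X₁, …, Xₘ])`, for any surjection of a domain `R` onto a
field `L`. -/
theorem exists_det_one_lift {R L : Type*} [CommRing R] [IsDomain R] [Field L] (q : R →+* L)
    (hq : Function.Surjective q) (m : ℕ) (f g : MvPolynomial (Fin m) R)
    (h : IsCoprime (MvPolynomial.map q f) (MvPolynomial.map q g)) :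
    ∃ (E : Matrix (Fin 2) (Fin 2) (MvPolynomial (Fin m) R)) (c : MvPolynomial (Fin m) R),
      E.det = 1 ∧ MvPolynomial.map q (c * E 0 0) = MvPolynomial.map q f ∧
      MvPolynomial.map q (c * E 1 0) = MvPolynomial.map q g := by
  by_cases hf : MvPolynomial.map q f = 0
  · exact ⟨!![0, -1; 1, 0], g, by simp [Matrix.det_fin_two_of], by simp [hf], by simp⟩
  induction m with
  | zero =>
    obtain ⟨y, hy⟩ := MvPolynomial.C_surjective (R := L) (Fin 0) (MvPolynomial.map q f)
    have hy0 : y ≠ 0 := by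
      rintro rfl
      exact hf (by simpa using hy.symm)
    obtain ⟨w, hw⟩ := hq y⁻¹
    refine ⟨!![1, 0; MvPolynomial.C w * g, 1], f, by simp [Matrix.det_fin_two_of], by simp, ?_⟩
    simp only [Matrix.of_apply, Matrix.cons_val', Matrix.cons_val_zero, Matrix.cons_val_one,
      Matrix.cons_val_fin_one, map_mul, MvPolynomial.map_C, hw, ← hy]
    rw [← mul_assoc, ← map_mul, mul_inv_cancel₀ hy0, map_one, one_mul]
  | succ m ih =>
    obtain ⟨N, a, ha, hlead⟩ := exists_leadingCoeff_shearEquiv hf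
    obtain ⟨v, rfl⟩ := hq a
    obtain ⟨w, hw⟩ := hq (q v)⁻¹
    have hwv : q w * q v = 1 := by rw [hw, inv_mul_cancel₀ ha]
    let φ : MvPolynomial (Fin m) R →+* MvPolynomial (Fin m) L := MvPolynomial.map q
    have hφ : Function.Surjective φ := MvPolynomial.map_surjective q hq
    let e := shearEquiv R m N
    have he (u) : (e u).map φ = shearEquiv L m N (MvPolynomial.map q u) := map_shearEquiv q m N u
    have hmonic : ((e (MvPolynomial.C w * f)).map φ).Monic := by
      rw [he, Polynomial.Monic, map_mul, MvPolynomial.map_C, map_mul, shearEquiv_C,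
        Polynomial.leadingCoeff_mul, Polynomial.leadingCoeff_C, hlead, ← map_mul, hwv, map_one]
    obtain ⟨f₁, hf₁, -, hf₁m⟩ := Polynomial.lifts_and_natDegree_eq_and_monic
      ((Polynomial.mem_lifts _).2 ⟨_, rfl⟩) hmonic
    set g₁ := e (MvPolynomial.C w * g) with hg₁
    have hcop : IsCoprime (f₁.map φ) (g₁.map φ) := by
      rw [hf₁, hg₁, he, he, map_mul, map_mul, map_mul, map_mul,
        isCoprime_mul_unit_left]
      · exact h.map (shearEquiv L m N).toRingHom
      · rw [MvPolynomial.map_C]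
        exact (((IsUnit.of_mul_eq_one _ hwv).map MvPolynomial.C).map (shearEquiv L m N))
    obtain ⟨E, hE, hE0, hE1⟩ := exists_det_one_mulVec_eval_zero φ hφ hf₁m hcop
    have hcop0 : IsCoprime (φ (f₁.eval 0)) (φ (g₁.eval 0)) := by
      simpa [Polynomial.coeff_zero_eq_eval_zero] using hcop.map (Polynomial.evalRingHom 0)
    obtain ⟨E₀, c, hE₀, hE₀0, hE₀1⟩ : ∃ (E : Matrix (Fin 2) (Fin 2) (MvPolynomial (Fin m) R))
        (c : MvPolynomial (Fin m) R), E.det = 1 ∧ φ (c * E 0 0) = φ (f₁.eval 0) ∧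
        φ (c * E 1 0) = φ (g₁.eval 0) := by
      by_cases h0 : φ (f₁.eval 0) = 0
      · exact ⟨!![0, -1; 1, 0], g₁.eval 0, by simp [Matrix.det_fin_two_of], by simp [h0], by simp⟩
      · exact ih _ _ hcop0 h0
    have key (u) (x y : Polynomial (MvPolynomial (Fin m) R)) (hu : (x * Polynomial.C (f₁.eval 0) +
        y * Polynomial.C (g₁.eval 0)).map φ = (e (MvPolynomial.C w * u)).map φ) :
        MvPolynomial.map q (MvPolynomial.C v * e.symm (Polynomial.C c) *
          e.symm (x * Polynomial.C (E₀ 0 0) + y * Polynomial.C (E₀ 1 0))) =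
        MvPolynomial.map q u := by
      apply (shearEquiv L m N).injective
      rw [← he, ← he, map_mul, map_mul, AlgEquiv.apply_symm_apply, AlgEquiv.apply_symm_apply]
      simp only [Polynomial.map_mul, Polynomial.map_add, Polynomial.map_C, map_mul]
        at hu hE₀0 hE₀1 ⊢
      rw [← hE₀0, ← hE₀1] at hu
      simp only [map_mul] at hu
      have hone : (e (MvPolynomial.C v)).map φ * (e (MvPolynomial.C w)).map φ = 1 := by
        rw [he, he, ← map_mul, ← map_mul, ← map_mul, MvPolynomial.map_C, map_mul, mul_comm (q v),
          hwv, map_one, map_one]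
      linear_combination (e (MvPolynomial.C v)).map φ * hu + (e u).map φ * hone
    refine ⟨(E * E₀.map Polynomial.C).map e.symm, MvPolynomial.C v * e.symm (Polynomial.C c),
      ?_, ?_, ?_⟩
    · have hC : (E₀.map Polynomial.C).det = 1 := by
        rw [← RingHom.mapMatrix_apply, ← RingHom.map_det, hE₀, map_one]
      rw [← AlgEquiv.mapMatrix_apply, ← AlgEquiv.map_det, Matrix.det_mul, hE, hC, one_mul, map_one]
    · simpa [Matrix.mul_apply, Fin.sum_univ_two] using key f (E 0 0) (E 0 1) (hE0.trans hf₁)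
    · simpa [Matrix.mul_apply, Fin.sum_univ_two] using key g (E 1 0) (E 1 1) hE1

theorem MatrixEquiv.map {A B : Type*} [CommRing A] [CommRing B] {l m : ℕ}
    {F G : Matrix (Fin l) (Fin m) A} (h : MatrixEquiv F G) (φ : A →+* B) :
    MatrixEquiv (F.map φ) (G.map φ) := by
  obtain ⟨U, V, hU, hV, rfl⟩ := h
  refine ⟨U.map φ, V.map φ, ?_, ?_, by simp [Matrix.map_mul]⟩
  · rw [← RingHom.mapMatrix_apply, ← RingHom.map_det]
    exact hU.map φ
  · rw [← RingHom.mapMatrix_apply, ← RingHom.map_det]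
    exact hV.map φ

/-- A matrix of determinant `p` whose second row is divisible by `p` after multiplication by
a matrix of determinant one is equivalent to `diag(1, p)`. -/
theorem matrixEquiv_diagonal_of_dvd {A : Type*} [CommRing A] [IsDomain A] {p : A} (hp : p ≠ 0)
    {F E : Matrix (Fin 2) (Fin 2) A} (hF : F.det = p) (hE : E.det = 1)
    (h : ∀ j, p ∣ E 0 0 * F 1 j - E 1 0 * F 0 j) :
    MatrixEquiv F (Matrix.diagonal ![1, p]) := by
  choose w hw using h
  let W : Matrix (Fin 2) (Fin 2) A :=
    !![E 1 1 * F 0 0 - E 0 1 * F 1 0, E 1 1 * F 0 1 - E 0 1 * F 1 1; w 0, w 1]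
  have hFW : F = E * Matrix.diagonal ![1, p] * W := by
    rw [Matrix.det_fin_two] at hE
    ext i j
    fin_cases i <;> fin_cases j <;>
      simp [W, Matrix.mul_apply, Fin.sum_univ_two, Matrix.diagonal_apply]
    · linear_combination E 0 1 * hw 0 - F 0 0 * hE
    · linear_combination E 0 1 * hw 1 - F 0 1 * hE
    · linear_combination E 1 1 * hw 0 - F 1 0 * hE
    · linear_combination E 1 1 * hw 1 - F 1 1 * hE
  have hW : W.det = 1 := by
    have := congrArg Matrix.det hFW
    rw [Matrix.det_mul, Matrix.det_mul, hE, hF, Matrix.det_diagonal] at this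
    simp only [Fin.prod_univ_two, Matrix.cons_val_zero, Matrix.cons_val_one, one_mul] at this
    exact mul_left_cancel₀ hp (by rw [← this, mul_one])
  exact ⟨E, W, by simp [hE], by simp [hW], hFW⟩

/-- A `2 × 2` matrix over `R[X₁, …, Xₘ]` with unit entry ideal and determinant `p ∈ R` is
equivalent to `diag(1, p)` when `p` generates the kernel of a surjection of `R` onto a field. -/
theorem matrixEquiv_diagonal_of_det_eq_C {R L : Type*} [CommRing R] [IsDomain R] [Field L]
    (q : R →+* L) (hq : Function.Surjective q) {p : R} (hp : p ≠ 0)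
    (hker : ∀ r, q r = 0 ↔ p ∣ r) {m : ℕ} (F : Matrix (Fin 2) (Fin 2) (MvPolynomial (Fin m) R))
    (hdet : F.det = MvPolynomial.C p)
    (hI : Ideal.span {a : MvPolynomial (Fin m) R | ∃ i j, a = F i j} = ⊤) :
    MatrixEquiv F (Matrix.diagonal ![1, MvPolynomial.C p]) := by
  let π : MvPolynomial (Fin m) R →+* MvPolynomial (Fin m) L := MvPolynomial.map q
  have hπ (u) : MvPolynomial.C p ∣ u ↔ π u = 0 :=
    MvPolynomial.C_dvd_iff_map_hom_eq_zero q p hker u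
  have hsing : π (F 0 0) * π (F 1 1) = π (F 0 1) * π (F 1 0) := by
    have := (hπ F.det).1 (dvd_of_eq hdet.symm)
    rwa [Matrix.det_fin_two, map_sub, map_mul, map_mul, sub_eq_zero] at this
  obtain ⟨u₁, u₂, v₁, v₂, h00, h01, h10, h11⟩ := exists_eq_mul_of_mul_eq_mul hsing
  obtain ⟨f, rfl⟩ := MvPolynomial.map_surjective q hq u₁
  obtain ⟨g, rfl⟩ := MvPolynomial.map_surjective q hq u₂
  have hcop : IsCoprime (π f) (π g) := by
    rw [IsCoprime, ← Ideal.mem_span_pair]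
    have hle : Ideal.span {a : MvPolynomial (Fin m) R | ∃ i j, a = F i j} ≤
        (Ideal.span {π f, π g}).comap π := by
      rw [Ideal.span_le]
      rintro _ ⟨i, j, rfl⟩
      have hf : π f ∈ Ideal.span {π f, π g} := Ideal.subset_span (by simp)
      have hg : π g ∈ Ideal.span {π f, π g} := Ideal.subset_span (by simp)
      fin_cases i <;> fin_cases j <;> simp only [SetLike.mem_coe, Ideal.mem_comap]
      · exact h00 ▸ Ideal.mul_mem_right _ _ hf
      · exact h01 ▸ Ideal.mul_mem_right _ _ hf
      · exact h10 ▸ Ideal.mul_mem_right _ _ hg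
      · exact h11 ▸ Ideal.mul_mem_right _ _ hg
    rw [hI] at hle
    simpa using hle (Submodule.mem_top : (1 : MvPolynomial (Fin m) R) ∈ ⊤)
  obtain ⟨E, c, hE, hE0, hE1⟩ := exists_det_one_lift q hq m f g hcop
  refine matrixEquiv_diagonal_of_dvd (by simpa using hp) hdet hE fun j => (hπ _).2 ?_
  rw [map_mul] at hE0 hE1
  fin_cases j
  · simp only [Fin.zero_eta, map_sub, map_mul, h00, h10, ← hE0, ← hE1, π]
    ring
  · simp only [Fin.mk_one, map_sub, map_mul, h01, h11, ← hE0, ← hE1, π]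
    ring

/-- `K[x₁, …, x_{n+1}]` as a polynomial ring in `n` variables over `K[x₁]`. -/
noncomputable def polyCoeffEquiv (K : Type*) [CommRing K] (n : ℕ) :
    MvPolynomial (Fin (n + 1)) K ≃ₐ[K] MvPolynomial (Fin n) (Polynomial K) :=
  (MvPolynomial.renameEquiv K (finSuccEquiv n)).trans (MvPolynomial.optionEquivRight K (Fin n))

theorem polyCoeffEquiv_polyImage {K : Type*} [CommRing K] (n : ℕ) (p : Polynomial K) :
    polyCoeffEquiv K n (polyImage n p) = MvPolynomial.C p := by
  have hX : polyCoeffEquiv K n (MvPolynomial.X 0) = MvPolynomial.C Polynomial.X := by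
    simp [polyCoeffEquiv]
  induction p using Polynomial.induction_on' with
  | add f g hf hg => simpa [polyImage] using congrArg₂ (· + ·) hf hg
  | monomial k a =>
    rw [polyImage, Polynomial.aeval_monomial, map_mul, map_pow, hX, AlgEquiv.commutes,
      ← Polynomial.C_mul_X_pow_eq_monomial, map_mul, map_pow]
    rfl

/-- if `F ∈ A^{2×2}` has `det F = p` with `p ∈ K[x₁]` irreducible,
and the entries of `F` generate the unit ideal (`I₁(F) = A`),
then `F ∼ diag(1, p)`. -/
theorem stmt4 {K : Type*} [Field K] {n : ℕ} (p : Polynomial K) (hp : Irreducible p)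
    (F : Matrix (Fin 2) (Fin 2) (MvPolynomial (Fin (n + 1)) K))
    (hdet : F.det = polyImage n p)
    (hI : Ideal.span {a : MvPolynomial (Fin (n + 1)) K | ∃ i j, a = F i j} = ⊤) :
    MatrixEquiv F (Matrix.diagonal ![1, polyImage n p]) := by
  have : Fact (Irreducible p) := ⟨hp⟩
  let e := polyCoeffEquiv K n
  have hdet' : (F.map e).det = MvPolynomial.C p := by
    rw [← AlgEquiv.mapMatrix_apply, ← AlgEquiv.map_det, hdet, polyCoeffEquiv_polyImage]
  have hI' : Ideal.span {a | ∃ i j, a = F.map e i j} = ⊤ := by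
    have := congrArg (Ideal.map e) hI
    rw [Ideal.map_span, Ideal.map_top] at this
    rw [← this]
    congr 1
    ext a
    constructor
    · rintro ⟨i, j, rfl⟩
      exact ⟨F i j, ⟨i, j, rfl⟩, rfl⟩
    · rintro ⟨_, ⟨i, j, rfl⟩, rfl⟩
      exact ⟨i, j, rfl⟩
  have h := (matrixEquiv_diagonal_of_det_eq_C (AdjoinRoot.mk p) AdjoinRoot.mk_surjective
    hp.ne_zero (fun _ => AdjoinRoot.mk_eq_zero) (F.map e) hdet' hI').map
      (e.symm : MvPolynomial (Fin n) (Polynomial K) →+* MvPolynomial (Fin (n + 1)) K)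
  convert h using 1
  · ext i j : 2
    simp
  · ext i j : 2
    fin_cases i <;> fin_cases j <;>
      simp [e, ← polyCoeffEquiv_polyImage]
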